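/- Let m and n be positive integers with n ≥ 4 even, let 0 ≤ ℓ ≤ n−1 be an integer of the same parity as m, and let G = ⟨t, x, y | t² = 1, x^{n/2} = 1, y^m = x^{(ℓ+m)/2}, txt = x⁻¹, tyt = y⁻¹, xy = yx⟩. Then there exists an automorphism of G fixing tx and interchanging t with ty if and only if gcd(n, ℓ−m) = 2m and 2mn divides ℓ² − 2mℓ − 3m². -/

import Mathlib

namespace HTGPaper

/-- The honeycomb toroidal graph `HTG(m,n,ℓ)`. -/
def HTG (m n ℓ : ℕ) : SimpleGraph (ZMod m × ZMod n) :=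
  SimpleGraph.fromRel (fun v w =>
    (v.1 = w.1 ∧ (w.2 = v.2 + 1 ∨ w.2 = v.2 - 1)) ∨
    (v.1.val ≠ m - 1 ∧ w.1 = v.1 + 1 ∧ w.2 = v.2 ∧ v.1.val % 2 ≠ v.2.val % 2) ∨
    (v.1.val = m - 1 ∧ w.1 = 0 ∧ w.2 = v.2 + (ℓ : ZMod n) ∧ v.2.val % 2 = m % 2))

/-- Generators of the generalized dihedral group `G`. -/
inductive Gen | t | x | y

/-- Relators of the presentation of `G`. -/
def rels (m n ℓ : ℕ) : Set (FreeGroup Gen) :=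
  {FreeGroup.of Gen.t ^ 2,
   FreeGroup.of Gen.x ^ (n / 2),
   FreeGroup.of Gen.y ^ m * (FreeGroup.of Gen.x ^ ((ℓ + m) / 2))⁻¹,
   FreeGroup.of Gen.t * FreeGroup.of Gen.x * (FreeGroup.of Gen.t)⁻¹ * FreeGroup.of Gen.x,
   FreeGroup.of Gen.t * FreeGroup.of Gen.y * (FreeGroup.of Gen.t)⁻¹ * FreeGroup.of Gen.y,
   FreeGroup.of Gen.x * FreeGroup.of Gen.y * (FreeGroup.of Gen.x)⁻¹ * (FreeGroup.of Gen.y)⁻¹}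

/-- The group `G = ⟨t,x,y | t², x^{n/2}, y^m x^{-(ℓ+m)/2}, txt⁻¹x, tyt⁻¹y, [x,y]⟩`. -/
abbrev G (m n ℓ : ℕ) : Type := PresentedGroup (rels m n ℓ)

def gent (m n ℓ : ℕ) : G m n ℓ := PresentedGroup.of Gen.t
def genx (m n ℓ : ℕ) : G m n ℓ := PresentedGroup.of Gen.x
def geny (m n ℓ : ℕ) : G m n ℓ := PresentedGroup.of Gen.y

/-- The connection set `{t, tx, ty}`. -/
def S (m n ℓ : ℕ) : Set (G m n ℓ) :=
  {gent m n ℓ, gent m n ℓ * genx m n ℓ, gent m n ℓ * geny m n ℓ}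

/-- The Cayley graph of a group with respect to a subset. -/
def cayley (H : Type*) [Group H] (T : Set H) : SimpleGraph H :=
  SimpleGraph.fromRel (fun g h => ∃ s ∈ T, h = g * s)

/-- The Cayley graph of an additive group with respect to a subset. -/
def addCayley (H : Type*) [AddGroup H] (T : Set H) : SimpleGraph H :=
  SimpleGraph.fromRel (fun g h => ∃ s ∈ T, h = g + s)

/-- `Cay(H;T)` is a normal Cayley graph of `H` if the left regular representation `H_L`
is a normal subgroup of the automorphism group, i.e. every conjugate of a left
translation by a graph automorphism is again a left translation. -/
def IsNormalCayley (H : Type*) [Group H] (T : Set H) : Prop :=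
  ∀ (f : cayley H T ≃g cayley H T) (a : H), ∃ b : H,
    ∀ g : H, f (a * f.symm g) = b * g

/-- An `s`-arc of a graph: `s+1` vertices, consecutive ones adjacent, and any three
consecutive vertices pairwise distinct. -/
def IsSArc {V : Type*} (Γ : SimpleGraph V) (s : ℕ) (p : Fin (s + 1) → V) : Prop :=
  (∀ i : Fin s, Γ.Adj (p i.castSucc) (p i.succ)) ∧
  ∀ i j : Fin (s + 1), (i : ℕ) + 2 = (j : ℕ) → p i ≠ p j

/-- A graph is `s`-arc-transitive if its automorphism group is transitive on `s`-arcs. -/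
def IsSArcTransitive {V : Type*} (Γ : SimpleGraph V) (s : ℕ) : Prop :=
  ∀ p q : Fin (s + 1) → V, IsSArc Γ s p → IsSArc Γ s q →
    ∃ f : Γ ≃g Γ, ∀ i, f (p i) = q i

/-- A graph is `s`-arc-regular if its automorphism group is regular on `s`-arcs. -/
def IsSArcRegular {V : Type*} (Γ : SimpleGraph V) (s : ℕ) : Prop :=
  ∀ p q : Fin (s + 1) → V, IsSArc Γ s p → IsSArc Γ s q →
    ∃! f : Γ ≃g Γ, ∀ i, f (p i) = q i

/-- A graph is arc-transitive if it is `1`-arc-transitive. -/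
def IsArcTransitive {V : Type*} (Γ : SimpleGraph V) : Prop :=
  IsSArcTransitive Γ 1

/-- The generalized prism `GPr(k)`. -/
def GPr (k : ℕ) : SimpleGraph (ZMod 2 × ZMod (2 * k)) :=
  SimpleGraph.fromRel (fun v w =>
    (v.1 = w.1 ∧ (w.2 = v.2 + 1 ∨ w.2 = v.2 - 1)) ∨
    (Even v.2.val ∧ w.1 = v.1 + 1 ∧ w.2 = v.2 + 1))

/-- The cubic graph on `k` vertices given by LCF-type data `f`. -/
def lcfGraph (k : ℕ) (f : ℕ → ℤ) : SimpleGraph (ZMod k) :=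
  SimpleGraph.fromRel (fun v w => w = v + 1 ∨ w = v + (f v.val : ZMod k))

/-- The cube graph `Q₃`, LCF notation `[3,-3]⁴`. -/
def cubeGraph : SimpleGraph (ZMod 8) :=
  lcfGraph 8 (fun i => if i % 2 = 0 then 3 else -3)

/-- The Heawood graph, LCF notation `[5,-5]⁷`. -/
def heawood : SimpleGraph (ZMod 14) :=
  lcfGraph 14 (fun i => if i % 2 = 0 then 5 else -5)

/-- The Möbius–Kantor graph, LCF notation `[5,-5]⁸`. -/
def mobiusKantor : SimpleGraph (ZMod 16) :=
  lcfGraph 16 (fun i => if i % 2 = 0 then 5 else -5)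

/-- The Pappus graph, LCF notation `[5,7,-7,7,-7,-5]³`. -/
def pappus : SimpleGraph (ZMod 18) :=
  lcfGraph 18 (fun i =>
    match i % 6 with
    | 0 => 5 | 1 => 7 | 2 => -7 | 3 => 7 | 4 => -7 | _ => -5)

/-- The red edges of `HTG(m,n,ℓ) = Cay(G;{t,tx,ty})`. -/
def Red (m n ℓ : ℕ) : Set (Sym2 (G m n ℓ)) :=
  {e | ∃ g : G m n ℓ, e = s(g, g * gent m n ℓ)}

/-- The blue edges. -/
def Blue (m n ℓ : ℕ) : Set (Sym2 (G m n ℓ)) :=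
  {e | ∃ g : G m n ℓ, e = s(g, g * (gent m n ℓ * genx m n ℓ))}

/-- The green edges. -/
def Green (m n ℓ : ℕ) : Set (Sym2 (G m n ℓ)) :=
  {e | ∃ g : G m n ℓ, e = s(g, g * (gent m n ℓ * geny m n ℓ))}

/-- The three color classes. -/
def colorClasses (m n ℓ : ℕ) : Set (Set (Sym2 (G m n ℓ))) :=
  {Red m n ℓ, Blue m n ℓ, Green m n ℓ}

/-- An automorphism of `Cay(G;{t,tx,ty})` is color permuting if it preserves the
partition of the edges into the three color classes. -/
def IsColorPermuting {m n ℓ : ℕ}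
    (f : cayley (G m n ℓ) (S m n ℓ) ≃g cayley (G m n ℓ) (S m n ℓ)) : Prop :=
  ∀ C ∈ colorClasses m n ℓ, Sym2.map ⇑f '' C ∈ colorClasses m n ℓ

/-- The group `Aut(H;T)` of automorphisms of `H` fixing `T` setwise. -/
def autFixing (H : Type*) [Group H] (T : Set H) : Subgroup (MulAut H) where
  carrier := {φ | ⇑φ '' T = T}
  one_mem' := by
    show ⇑(1 : MulAut H) '' T = T
    simp
  mul_mem' := by
    intro a b ha hb
    show ⇑(a * b) '' T = T
    have h : ⇑(a * b) = ⇑a ∘ ⇑b := rfl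
    rw [h, Set.image_comp]
    rw [show ⇑b '' T = T from hb, show ⇑a '' T = T from ha]
  inv_mem' := by
    intro a ha
    show ⇑a⁻¹ '' T = T
    conv_lhs => rw [← show ⇑a '' T = T from ha]
    rw [← Set.image_comp]
    have h : ⇑a⁻¹ ∘ ⇑a = id := by
      funext g
      simp
    rw [h, Set.image_id]



/-- Arithmetic reformulation of the divisibility conditions. -/
theorem arith_iff (m N k n l : ℤ) (hm : 0 < m) (hn : n = 2 * N) (hk : l + m = 2 * k) :
    (Int.gcd n (l - m) = 2 * m ∧ (2 * m * n : ℤ) ∣ (l ^ 2 - 2 * m * l - 3 * m ^ 2)) ↔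
    (m ∣ N ∧ m ∣ k ∧ m * N ∣ (2 * m - k) * k) := by
  obtain rfl : l = 2 * k - m := by linarith
  subst hn
  have e1 : (2 * k - m) - m = 2 * (k - m) := by ring
  have e2 : (2 * k - m) ^ 2 - 2 * m * (2 * k - m) - 3 * m ^ 2 = 4 * (-((2 * m - k) * k)) := by ring
  have e3 : 2 * m * (2 * N) = 4 * (m * N) := by ring
  have e4 : ((Int.gcd (2 * N) (2 * (k - m)) : ℕ) : ℤ) = 2 * (Int.gcd N (k - m) : ℤ) := by
    rw [Int.gcd_mul_left]; push_cast; rfl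
  rw [e1, e2, e3, e4, mul_dvd_mul_iff_left (by norm_num), dvd_neg]
  constructor
  · rintro ⟨h1, h2⟩
    have h1 : (Int.gcd N (k - m) : ℤ) = m := by linarith
    have a := Int.gcd_dvd_left N (k - m)
    have b := Int.gcd_dvd_right N (k - m)
    rw [h1] at a b
    exact ⟨a, by simpa using dvd_add b (dvd_refl m), h2⟩
  · rintro ⟨⟨N', rfl⟩, ⟨k', rfl⟩, h2⟩
    refine ⟨?_, h2⟩
    have e5 : m * k' - m = m * (k' - 1) := by ring
    have e6 : (2 * m - m * k') * (m * k') = (m * m) * ((2 - k') * k') := by ring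
    rw [e6, ← mul_assoc, mul_dvd_mul_iff_left (by positivity)] at h2
    obtain ⟨c, hc⟩ := h2
    have hcop : Int.gcd N' (k' - 1) = 1 := by
      rw [← Int.isCoprime_iff_gcd_eq_one]
      exact ⟨c, k' - 1, by linear_combination -hc⟩
    rw [e5, Int.gcd_mul_left, hcop]
    simp [abs_of_pos hm]

/-- The relation lattice. -/
def lat (m N k : ℤ) : AddSubgroup (ℤ × ℤ) where
  carrier := {p | ∃ u v : ℤ, p.1 = u * N - v * k ∧ p.2 = v * m}
  zero_mem' := ⟨0, 0, by simp, by simp⟩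
  add_mem' := by
    rintro a b ⟨u, v, h1, h2⟩ ⟨u', v', h3, h4⟩
    exact ⟨u + u', v + v', by simp only [Prod.fst_add, h1, h3]; ring,
      by simp only [Prod.snd_add, h2, h4]; ring⟩
  neg_mem' := by
    rintro a ⟨u, v, h1, h2⟩
    exact ⟨-u, -v, by simp only [Prod.fst_neg, h1]; ring, by simp only [Prod.snd_neg, h2]; ring⟩

/-- Images of the generators as permutations of the lattice quotient. -/
def permGen (m N k : ℤ) : Gen → Equiv.Perm ((ℤ × ℤ) ⧸ lat m N k)
  | Gen.t => Equiv.neg _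
  | Gen.x => Equiv.addRight (QuotientAddGroup.mk (1, 0))
  | Gen.y => Equiv.addRight (QuotientAddGroup.mk (0, 1))

theorem addRight_pow' {A : Type*} [AddGroup A] (a : A) (j : ℕ) :
    (Equiv.addRight a) ^ j = Equiv.addRight (j • a) := by
  simp

theorem addRight_zpow_aux {A : Type*} [AddGroup A] (a : A) (j : ℤ) :
    (Equiv.addRight a) ^ j = Equiv.addRight (j • a) := by
  simp

theorem perm_rels (m n ℓ : ℕ) :
    ∀ r ∈ rels m n ℓ,
      FreeGroup.lift (permGen m (n / 2 : ℕ) ((ℓ + m) / 2 : ℕ)) r = 1 := by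
  intro r hr
  simp only [rels, Set.mem_insert_iff, Set.mem_singleton_iff] at hr
  rcases hr with rfl | rfl | rfl | rfl | rfl | rfl
  · ext a; simp [permGen, pow_two]
  · simp only [map_pow, FreeGroup.lift_apply_of, permGen, addRight_pow']
    have : ((n / 2 : ℕ) • (QuotientAddGroup.mk (1, 0) :
        (ℤ × ℤ) ⧸ lat m (n / 2 : ℕ) ((ℓ + m) / 2 : ℕ))) = 0 := by
      rw [← QuotientAddGroup.mk_nsmul, QuotientAddGroup.eq_zero_iff]
      exact ⟨1, 0, by simp, by simp⟩
    rw [this]; ext a; simp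
  · simp only [map_pow, map_mul, map_inv, FreeGroup.lift_apply_of, permGen, addRight_pow']
    rw [mul_inv_eq_one]
    congr 1
    rw [← QuotientAddGroup.mk_nsmul, ← QuotientAddGroup.mk_nsmul, QuotientAddGroup.eq]
    exact ⟨0, -1, by simp, by simp⟩
  all_goals
    simp only [map_mul, map_inv, FreeGroup.lift_apply_of, permGen]
    ext a
    simp [Equiv.Perm.mul_apply, Equiv.Perm.inv_def]
    try abel

theorem geny_mem (m n ℓ : ℕ) (j : ℤ) (h : geny m n ℓ ^ j = 1) :
    ((0, j) : ℤ × ℤ) ∈ lat m (n / 2 : ℕ) ((ℓ + m) / 2 : ℕ) := by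
  have h2 := congrArg (PresentedGroup.toGroup (perm_rels m n ℓ)) h
  rw [map_zpow, map_one, geny, PresentedGroup.toGroup.of] at h2
  have h3 := Equiv.congr_fun h2 0
  simp only [permGen, addRight_zpow_aux, Equiv.coe_addRight, zero_add, Equiv.Perm.one_apply] at h3
  rw [← QuotientAddGroup.mk_zsmul, QuotientAddGroup.eq_zero_iff] at h3
  simpa using h3

section relations
variable (m n ℓ : ℕ)

theorem rel_t : gent m n ℓ * gent m n ℓ = 1 := by
  have := PresentedGroup.one_of_mem (rels := rels m n ℓ) (x := FreeGroup.of Gen.t ^ 2)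
    (by simp [rels])
  rw [map_pow, pow_two] at this
  exact this

theorem rel_x : genx m n ℓ ^ (n / 2) = 1 := by
  have := PresentedGroup.one_of_mem (rels := rels m n ℓ) (x := FreeGroup.of Gen.x ^ (n / 2))
    (by simp [rels])
  rw [map_pow] at this
  exact this

theorem rel_y : geny m n ℓ ^ m = genx m n ℓ ^ ((ℓ + m) / 2) := by
  have := PresentedGroup.one_of_mem (rels := rels m n ℓ)
    (x := FreeGroup.of Gen.y ^ m * (FreeGroup.of Gen.x ^ ((ℓ + m) / 2))⁻¹) (by simp [rels])
  rw [map_mul, map_inv, map_pow, map_pow, mul_inv_eq_one] at this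
  exact this

theorem rel_t_inv : (gent m n ℓ)⁻¹ = gent m n ℓ := inv_eq_of_mul_eq_one_left (rel_t m n ℓ)

theorem rel_tx : gent m n ℓ * genx m n ℓ = (genx m n ℓ)⁻¹ * gent m n ℓ := by
  have := PresentedGroup.one_of_mem (rels := rels m n ℓ)
    (x := FreeGroup.of Gen.t * FreeGroup.of Gen.x * (FreeGroup.of Gen.t)⁻¹ * FreeGroup.of Gen.x)
    (by simp [rels])
  rw [map_mul, map_mul, map_mul, map_inv] at this
  have h : gent m n ℓ * genx m n ℓ * (gent m n ℓ)⁻¹ * genx m n ℓ = 1 := this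
  rw [mul_eq_one_iff_eq_inv, mul_inv_eq_iff_eq_mul] at h
  exact h

theorem rel_ty : gent m n ℓ * geny m n ℓ = (geny m n ℓ)⁻¹ * gent m n ℓ := by
  have := PresentedGroup.one_of_mem (rels := rels m n ℓ)
    (x := FreeGroup.of Gen.t * FreeGroup.of Gen.y * (FreeGroup.of Gen.t)⁻¹ * FreeGroup.of Gen.y)
    (by simp [rels])
  rw [map_mul, map_mul, map_mul, map_inv] at this
  have h : gent m n ℓ * geny m n ℓ * (gent m n ℓ)⁻¹ * geny m n ℓ = 1 := this
  rw [mul_eq_one_iff_eq_inv, mul_inv_eq_iff_eq_mul] at h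
  exact h

theorem rel_xy : Commute (genx m n ℓ) (geny m n ℓ) := by
  have := PresentedGroup.one_of_mem (rels := rels m n ℓ)
    (x := FreeGroup.of Gen.x * FreeGroup.of Gen.y * (FreeGroup.of Gen.x)⁻¹ *
      (FreeGroup.of Gen.y)⁻¹) (by simp [rels])
  rw [map_mul, map_mul, map_mul, map_inv, map_inv] at this
  have h : genx m n ℓ * geny m n ℓ * (genx m n ℓ)⁻¹ * (geny m n ℓ)⁻¹ = 1 := this
  rw [mul_inv_eq_one, mul_inv_eq_iff_eq_mul] at h
  exact h

end relations

/-- Images of the generators under the wanted automorphism. -/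
def autGen (m n ℓ : ℕ) : Gen → G m n ℓ
  | Gen.t => gent m n ℓ * geny m n ℓ
  | Gen.x => (geny m n ℓ)⁻¹ * genx m n ℓ
  | Gen.y => (geny m n ℓ)⁻¹

theorem aut_rels (m n ℓ : ℕ) (h1 : geny m n ℓ ^ (n / 2) = 1)
    (h2 : geny m n ℓ ^ (2 * m) = geny m n ℓ ^ ((ℓ + m) / 2)) :
    ∀ r ∈ rels m n ℓ, FreeGroup.lift (autGen m n ℓ) r = 1 := by
  have ht := rel_t m n ℓ
  have hti := rel_t_inv m n ℓ
  have hx := rel_x m n ℓ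
  have hy := rel_y m n ℓ
  have htx := rel_tx m n ℓ
  have hty := rel_ty m n ℓ
  have hxy := rel_xy m n ℓ
  intro r hr
  simp only [rels, Set.mem_insert_iff, Set.mem_singleton_iff] at hr
  rcases hr with rfl | rfl | rfl | rfl | rfl | rfl <;>
    simp only [map_mul, map_inv, map_pow, FreeGroup.lift_apply_of, autGen] <;>
    generalize gent m n ℓ = t at * <;> generalize genx m n ℓ = x at * <;>
    generalize geny m n ℓ = y at *
  · rw [pow_two]
    nth_rewrite 1 [hty]
    rw [mul_assoc, ← mul_assoc t t, ht, one_mul, inv_mul_cancel]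
  · rw [hxy.symm.inv_left.mul_pow, hx, inv_pow, h1]; simp
  · rw [mul_inv_eq_one, hxy.symm.inv_left.mul_pow, ← hy, inv_pow, inv_pow, ← h2, two_mul, pow_add]
    group
  · have : t * y * (y⁻¹ * x) * (t * y)⁻¹ * (y⁻¹ * x) = (t * x) * y⁻¹ * t⁻¹ * y⁻¹ * x := by group
    rw [this, htx, hti]
    have e : t * y⁻¹ = y * t := by
      rw [mul_inv_eq_iff_eq_mul, mul_assoc, hty, mul_inv_cancel_left]
    calc x⁻¹ * t * y⁻¹ * t * y⁻¹ * x = x⁻¹ * (t * y⁻¹) * t * y⁻¹ * x := by group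
      _ = x⁻¹ * y * (t * t) * y⁻¹ * x := by rw [e]; group
      _ = 1 := by rw [ht]; group
  · have e : t * y⁻¹ = y * t := by
      rw [mul_inv_eq_iff_eq_mul, mul_assoc, hty, mul_inv_cancel_left]
    calc t * y * y⁻¹ * (t * y)⁻¹ * y⁻¹ = (t * y⁻¹) * t⁻¹ * y⁻¹ := by group
      _ = 1 := by rw [e]; group
  · have h := hxy.eq
    have c : Commute (y⁻¹ * x) (y⁻¹) :=
      (Commute.refl y⁻¹).mul_left (hxy.inv_right)
    rw [mul_inv_eq_one, mul_inv_eq_iff_eq_mul]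
    exact c.eq

theorem exists_aut (m n ℓ : ℕ) (h1 : geny m n ℓ ^ (n / 2) = 1)
    (h2 : geny m n ℓ ^ (2 * m) = geny m n ℓ ^ ((ℓ + m) / 2)) :
    ∃ φ : MulAut (G m n ℓ),
        φ (gent m n ℓ * genx m n ℓ) = gent m n ℓ * genx m n ℓ ∧
        φ (gent m n ℓ) = gent m n ℓ * geny m n ℓ ∧
        φ (gent m n ℓ * geny m n ℓ) = gent m n ℓ := by
  let f : G m n ℓ →* G m n ℓ := PresentedGroup.toGroup (aut_rels m n ℓ h1 h2)
  have ft : f (gent m n ℓ) = gent m n ℓ * geny m n ℓ := PresentedGroup.toGroup.of _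
  have fx : f (genx m n ℓ) = (geny m n ℓ)⁻¹ * genx m n ℓ := PresentedGroup.toGroup.of _
  have fy : f (geny m n ℓ) = (geny m n ℓ)⁻¹ := PresentedGroup.toGroup.of _
  have hff : f.comp f = MonoidHom.id _ := by
    apply PresentedGroup.ext
    rintro (_ | _ | _)
    · change f (f (gent m n ℓ)) = gent m n ℓ
      rw [ft, map_mul, ft, fy]; group
    · change f (f (genx m n ℓ)) = genx m n ℓ
      rw [fx, map_mul, map_inv, fx, fy]; group
    · change f (f (geny m n ℓ)) = geny m n ℓ
      rw [fy, map_inv, fy]; group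
  refine ⟨MonoidHom.toMulEquiv f f hff hff, ?_, ?_, ?_⟩
  · rw [MonoidHom.toMulEquiv_apply]
    rw [map_mul, ft, fx]; group
  · exact ft
  · rw [MonoidHom.toMulEquiv_apply]
    rw [map_mul, ft, fy]; group

theorem pow_of_aut (m n ℓ : ℕ) (φ : MulAut (G m n ℓ))
    (ha : φ (gent m n ℓ * genx m n ℓ) = gent m n ℓ * genx m n ℓ)
    (hb : φ (gent m n ℓ) = gent m n ℓ * geny m n ℓ)
    (hc : φ (gent m n ℓ * geny m n ℓ) = gent m n ℓ) :
    geny m n ℓ ^ (n / 2) = 1 ∧ geny m n ℓ ^ (2 * m) = geny m n ℓ ^ ((ℓ + m) / 2) := by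
  have hx := rel_x m n ℓ
  have hy := rel_y m n ℓ
  have hxy := rel_xy m n ℓ
  have fy : φ (geny m n ℓ) = (geny m n ℓ)⁻¹ := by
    rw [map_mul, hb] at hc
    rw [← mul_right_inj (gent m n ℓ * geny m n ℓ), hc]; group
  have fx : φ (genx m n ℓ) = (geny m n ℓ)⁻¹ * genx m n ℓ := by
    rw [map_mul, hb] at ha
    rw [← mul_right_inj (gent m n ℓ * geny m n ℓ), ha]; group
  have hx2 := congrArg φ hx
  have hy2 := congrArg φ hy
  rw [map_pow, map_one, fx, hxy.symm.inv_left.mul_pow, hx, inv_pow, mul_one, inv_eq_one] at hx2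
  rw [map_pow, map_pow, fx, fy, hxy.symm.inv_left.mul_pow, ← hy, inv_pow, inv_pow] at hy2
  refine ⟨hx2, ?_⟩
  rw [two_mul, pow_add]
  rw [eq_inv_mul_iff_mul_eq, mul_inv_eq_iff_eq_mul] at hy2
  exact hy2.symm

theorem pow_of_arith (m n ℓ : ℕ) (hm : 0 < m) (h1 : (m : ℤ) ∣ (n / 2 : ℕ))
    (h2 : (m : ℤ) ∣ ((ℓ + m) / 2 : ℕ))
    (h3 : (m : ℤ) * (n / 2 : ℕ) ∣ (2 * m - ((ℓ + m) / 2 : ℕ)) * ((ℓ + m) / 2 : ℕ)) :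
    geny m n ℓ ^ (n / 2) = 1 ∧ geny m n ℓ ^ (2 * m) = geny m n ℓ ^ ((ℓ + m) / 2) := by
  have hx := rel_x m n ℓ
  have hy := rel_y m n ℓ
  generalize genx m n ℓ = x at *
  generalize geny m n ℓ = y at *
  generalize n / 2 = N at *
  generalize (ℓ + m) / 2 = k at *
  have hm0 : (m : ℤ) ≠ 0 := by exact_mod_cast hm.ne'
  obtain ⟨a, rfl⟩ := Int.natCast_dvd_natCast.mp h1
  obtain ⟨b, rfl⟩ := Int.natCast_dvd_natCast.mp h2
  constructor
  · rw [pow_mul, hy, ← pow_mul, show m * b * a = m * a * b by ring, pow_mul, hx, one_pow]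
  · obtain ⟨c, hc⟩ := h3
    have hc' : ((m * b : ℕ) : ℤ) * (2 - b) = ((m * a : ℕ) : ℤ) * c := by
      apply mul_left_cancel₀ hm0
      push_cast at hc ⊢
      linear_combination hc
    have key : y ^ ((m : ℤ) * (2 - b)) = 1 := by
      rw [zpow_mul, zpow_natCast, hy, ← zpow_natCast, ← zpow_mul, hc', zpow_mul, zpow_natCast, hx,
        one_zpow]
    rw [← zpow_natCast, ← zpow_natCast, ← mul_inv_eq_one, ← zpow_neg, ← zpow_add, ← key]
    congr 1
    push_cast; ring

/-- **Lemma 4.2.** There exists an automorphism of `G` fixing `tx` and interchanging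
`t` with `ty` iff `gcd(n,ℓ-m) = 2m` and `2mn ∣ ℓ² - 2mℓ - 3m²`. -/
theorem statement8 (m n ℓ : ℕ) (hm : 0 < m) (hn : 4 ≤ n) (hne : Even n)
    (hl : ℓ ≤ n - 1) (hpar : ℓ % 2 = m % 2) :
    (∃ φ : MulAut (G m n ℓ),
        φ (gent m n ℓ * genx m n ℓ) = gent m n ℓ * genx m n ℓ ∧
        φ (gent m n ℓ) = gent m n ℓ * geny m n ℓ ∧
        φ (gent m n ℓ * geny m n ℓ) = gent m n ℓ) ↔
      (Int.gcd (n : ℤ) ((ℓ : ℤ) - m) = 2 * m ∧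
        (2 * m * n : ℤ) ∣ ((ℓ : ℤ) ^ 2 - 2 * m * ℓ - 3 * m ^ 2)) := by
  obtain ⟨N, hN⟩ := hne
  have hN2 : n / 2 = N := by omega
  have hk : ((ℓ : ℤ) + m) = 2 * ((ℓ + m) / 2 : ℕ) := by omega
  have hn' : (n : ℤ) = 2 * (n / 2 : ℕ) := by omega
  have hpos : 0 < n / 2 := by omega
  have har := arith_iff m (n / 2 : ℕ) ((ℓ + m) / 2 : ℕ) n ℓ (by exact_mod_cast hm) hn' hk
  have hcast : (Int.gcd (n : ℤ) ((ℓ : ℤ) - m) = 2 * m) ↔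
      ((Int.gcd (n : ℤ) ((ℓ : ℤ) - m) : ℕ) : ℤ) = 2 * m := by
    exact_mod_cast Iff.rfl
  rw [hcast, har]
  constructor
  · rintro ⟨φ, ha, hb, hc⟩
    obtain ⟨h1, h2⟩ := pow_of_aut m n ℓ φ ha hb hc
    have g1 := geny_mem m n ℓ ((n / 2 : ℕ) : ℤ) (by rw [zpow_natCast]; exact h1)
    have g2 := geny_mem m n ℓ (((2 * m : ℕ) : ℤ) - ((ℓ + m) / 2 : ℕ))
      (by rw [zpow_sub, zpow_natCast, zpow_natCast, h2, mul_inv_cancel])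
    obtain ⟨u, v, e1, e2⟩ := g1
    obtain ⟨u', v', e3, e4⟩ := g2
    generalize ((ℓ + m) / 2 : ℕ) = k at *
    generalize n / 2 = M at *
    have hM : (M : ℤ) ≠ 0 := by exact_mod_cast hpos.ne'
    simp only at e1 e2 e3 e4
    push_cast at e4
    have hv : v ≠ 0 := by
      rintro rfl
      simp at e2; omega
    refine ⟨⟨v, by linarith⟩, ⟨u, ?_⟩, ⟨u', ?_⟩⟩
    · apply mul_left_cancel₀ hv
      linear_combination e1 + u * e2
    · linear_combination (k : ℤ) * e4 + m * e3
  · rintro ⟨h1, h2, h3⟩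
    obtain ⟨p, q⟩ := pow_of_arith m n ℓ hm h1 h2 h3
    exact exists_aut m n ℓ p q

end HTGPaper
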